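/- For every v = (x_1, …, x_n) ∈ ([−1,1]∖{0})^n, the set K_v of canonical index pairs admits a good partition: there is a partition η_v of K_v such that every block p ∈ η_v is of one of the following five types: (1) p = {(i,j)} a singleton with s(i,j) = +1; (2) p = {(i,j), (i',j')} with s(i,j) = +1, s(i',j') = −1, and either (i' ≤ i and j = j') or (i' = i and j ≤ j'); (3) p = {(i,j), (i−l,j), (i,j+l'), (i−l,j+l')} with l, l' ≥ 1, s(i,j) = s(i−l,j+l') = +1 and s(i−l,j) = s(i,j+l') = −1; (4) p = {(i,j)} a singleton with s(i,j) = −1; (5) p = {(i,j), (i+l,j), (i,j−l')} with l, l' ≥ 1, s(i,j) = +1 and s(i+l,j) = s(i,j−l') = −1. Moreover, the number of blocks of types (4) or (5) equals min(α+1, β), where α and β are respectively the number of indices i ∈ {1, …, n} for which the partial product ∏_{k=1}^{i} x_k is positive, respectively negative. -/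

import Mathlib

open Finset

/-- The product sign `s(i,j) = ∏_{k=i}^{j} sign(x_k)`. -/
noncomputable def psign (x : ℕ → ℝ) (i j : ℕ) : ℝ :=
  ∏ k ∈ Finset.Icc i j, Real.sign (x k)

open Classical in
/-- The set `K_v` of canonical index pairs: `s(i,j) = (-1)^(i+j+1)`. -/
noncomputable def Kv (n : ℕ) (x : ℕ → ℝ) : Finset (ℕ × ℕ) :=
  (Finset.Icc 1 n ×ˢ Finset.Icc 1 n).filter
    (fun q => q.1 ≤ q.2 ∧ psign x q.1 q.2 = (-1 : ℝ) ^ (q.1 + q.2 + 1))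

/-- Type (1): a singleton `{(i,j)}` with `s(i,j) = +1`. -/
def IsType1 (x : ℕ → ℝ) (p : Finset (ℕ × ℕ)) : Prop :=
  ∃ i j : ℕ, p = {(i, j)} ∧ psign x i j = 1

/-- Type (2): `{(i,j), (i',j')}` with `s(i,j) = +1`, `s(i',j') = -1`, and
`(i' ≤ i ∧ j = j')` or `(i' = i ∧ j ≤ j')`. -/
def IsType2 (x : ℕ → ℝ) (p : Finset (ℕ × ℕ)) : Prop :=
  ∃ i j i' j' : ℕ, p = {(i, j), (i', j')} ∧
    psign x i j = 1 ∧ psign x i' j' = -1 ∧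
    ((i' ≤ i ∧ j = j') ∨ (i' = i ∧ j ≤ j'))

/-- Type (3): `{(i,j), (i-l,j), (i,j+l'), (i-l,j+l')}` with `l, l' ≥ 1`,
`s(i,j) = s(i-l,j+l') = +1` and `s(i-l,j) = s(i,j+l') = -1`. -/
def IsType3 (x : ℕ → ℝ) (p : Finset (ℕ × ℕ)) : Prop :=
  ∃ i j l l' : ℕ, 1 ≤ l ∧ 1 ≤ l' ∧
    p = {(i, j), (i - l, j), (i, j + l'), (i - l, j + l')} ∧
    psign x i j = 1 ∧ psign x (i - l) (j + l') = 1 ∧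
    psign x (i - l) j = -1 ∧ psign x i (j + l') = -1

/-- Type (4): a singleton `{(i,j)}` with `s(i,j) = -1`. -/
def IsType4 (x : ℕ → ℝ) (p : Finset (ℕ × ℕ)) : Prop :=
  ∃ i j : ℕ, p = {(i, j)} ∧ psign x i j = -1

/-- Type (5): `{(i,j), (i+l,j), (i,j-l')}` with `l, l' ≥ 1`, `s(i,j) = +1`
and `s(i+l,j) = s(i,j-l') = -1`. -/
def IsType5 (x : ℕ → ℝ) (p : Finset (ℕ × ℕ)) : Prop :=
  ∃ i j l l' : ℕ, 1 ≤ l ∧ 1 ≤ l' ∧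
    p = {(i, j), (i + l, j), (i, j - l')} ∧
    psign x i j = 1 ∧ psign x (i + l) j = -1 ∧ psign x i (j - l') = -1

/-!
Let `ε a` be the sign of `x 1 ⋯ x a` for `a = 0, …, n`. The index pair `(a + 1, b)` is an edge
`a < b` with sign `ε a * ε b`, and it is canonical iff `(-1) ^ a * ε a` and `(-1) ^ b * ε b`
agree; hence `K_v` consists of all edges inside two disjoint classes of vertices.

For signs on any finite linear order, all edges together split into blocks, as many of them bad as
there are vertices of the rarer sign. Cut the sign sequence at an extremal point of its walk of
partial sums, just before a vertex `t`. If the predecessor `p` of `t` exists, it has the sign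
opposite to `t`, and removing both lowers the minority by one. To the right of the cut the signs,
multiplied by `ε t`, form a ballot sequence; to the left they do so when read backwards and
multiplied by `ε p`. Matching each negative letter with an earlier positive one groups the edges at
`p` and `t` into blocks; only the edge `(p, t)` is left over or completed to a triangle, which makes
one bad block. If `t` comes first, removing `t` alone creates no bad block.

The sums of `ε` over the two classes differ by `∑ (-1) ^ a ∈ {0, 1}`, so the minority signs of the
classes are compatible, and the two minorities add up to that of all vertices, `min (α + 1) β`.
-/

/-! ### Ballot sequences -/

theorem exists_append_suffix_nonpos_prefix_pos {ι G : Type*} [AddCommGroup G] [LinearOrder G]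
    [IsOrderedAddMonoid G] (f : ι → G) (l : List ι) :
    ∃ L R, l = L ++ R ∧ (∀ S, S <:+ L → (S.map f).sum ≤ 0) ∧
      ∀ P, P <+: R → P ≠ [] → 0 < (P.map f).sum := by
  induction l with
  | nil => exact ⟨[], [], by simp⟩
  | cons a l ih =>
    obtain ⟨L, R, rfl, hL, hR⟩ := ih
    rcases le_or_gt ((a :: L).map f).sum 0 with hneg | hpos
    · refine ⟨a :: L, R, rfl, fun S hS ↦ ?_, hR⟩
      rcases List.suffix_cons_iff.1 hS with rfl | hS
      exacts [hneg, hL S hS]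
    · refine ⟨[], a :: (L ++ R), rfl, by simp, fun P hP hne ↦ ?_⟩
      obtain ⟨P, rfl, htail⟩ := (List.prefix_cons_iff.1 hP).resolve_left hne
      rw [List.map_cons, List.sum_cons] at hpos ⊢
      rcases List.prefix_or_prefix_of_prefix htail (List.prefix_append L R) with ⟨S, rfl⟩ | ⟨Q, rfl⟩
      · have hS := hL S (List.suffix_append P S)
        rw [List.map_append, List.sum_append, ← add_assoc] at hpos
        exact hpos.trans_le (add_le_of_nonpos_right hS)
      · rw [List.map_append, List.sum_append, ← add_assoc]
        rcases eq_or_ne Q [] with rfl | hQ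
        · simpa using hpos
        · exact add_pos hpos (hR Q ((List.prefix_append_right_inj L).1 htail) hQ)

-- The stack holds the values of the positive letters not yet matched; a negative letter is matched
-- with the top of the stack, which the ballot condition keeps from being empty.
theorem sum_mem_of_ballot {ι M : Type*} [AddCommMonoid M] (S : AddSubmonoid M) (W : ι → M)
    (w : ι → ℤˣ) (stack : List M) (l : List ι)
    (hstack : ∀ m ∈ stack, m ∈ S ∧ ∀ b ∈ l, w b = -1 → m + W b ∈ S)
    (hopen : ∀ a ∈ l, w a = 1 → W a ∈ S)
    (hpair : l.Pairwise fun a b ↦ w a = 1 → w b = -1 → W a + W b ∈ S)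
    (hballot : ∀ P, P <+: l → 0 ≤ stack.length + (P.map fun a ↦ (w a : ℤ)).sum) :
    stack.sum + (l.map W).sum ∈ S := by
  induction l generalizing stack with
  | nil => simpa using list_sum_mem fun m hm ↦ (hstack m hm).1
  | cons a l ih =>
    rw [List.pairwise_cons] at hpair
    simp only [List.forall_mem_cons] at hstack hopen
    have hballot_tail : ∀ P, P <+: l →
        0 ≤ stack.length + ((w a : ℤ) + (P.map fun a ↦ (w a : ℤ)).sum) := fun P hP ↦ by
      simpa using hballot (a :: P) (List.cons_prefix_cons.2 ⟨rfl, hP⟩)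
    rcases Int.units_eq_one_or (w a) with ha | ha
    · have hmem := ih (W a :: stack)
        (List.forall_mem_cons.2 ⟨⟨hopen.1 ha, fun b hb ↦ hpair.1 b hb ha⟩,
          fun m hm ↦ ⟨(hstack m hm).1, (hstack m hm).2.2⟩⟩)
        hopen.2 hpair.2 fun P hP ↦ by
          have := hballot_tail P hP
          simp only [ha, Units.val_one, List.length_cons, Nat.cast_add, Nat.cast_one] at this ⊢
          lia
      simpa [add_assoc, add_left_comm] using hmem
    · cases stack with
      | nil => simpa [ha] using hballot_tail [] List.nil_prefix
      | cons m stack =>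
        simp only [List.forall_mem_cons] at hstack
        have hmem := ih stack (fun m hm ↦ ⟨(hstack.2 m hm).1, (hstack.2 m hm).2.2⟩)
          hopen.2 hpair.2 fun P hP ↦ by
            have := hballot_tail P hP
            simp only [ha, Units.val_neg, Units.val_one, List.length_cons, Nat.cast_add,
              Nat.cast_one] at this
            lia
        simpa [add_assoc, add_left_comm] using S.add_mem (hstack.1.2.1 ha) hmem

/-! ### Increasing pairs and the minority sign -/

theorem units_mul_eq_one_iff : ∀ u v : ℤˣ, u * v = 1 ↔ u = v := by decide
theorem units_mul_eq_neg_one_iff : ∀ u v : ℤˣ, u * v = -1 ↔ u ≠ v := by decide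
theorem units_eq_of_ne_of_ne : ∀ u v w : ℤˣ, u ≠ v → v ≠ w → u = w := by decide
theorem units_eq_of_mul_pos : ∀ u v : ℤˣ, 0 < ((u * v : ℤˣ) : ℤ) → u = v := by decide
theorem units_mul_eq_mul_iff : ∀ s t u v : ℤˣ, u * v = s * t ↔ s * u = t * v := by decide

/-- The edges `(a, b)`, `a < b`, of the complete graph on `s`, oriented upwards. -/
def increasingPairs {α : Type*} [LT α] [DecidableLT α] (s : Multiset α) : Multiset (α × α) :=
  (s ×ˢ s).filter fun e ↦ e.1 < e.2

section

variable {α : Type*} [LinearOrder α]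

theorem increasingPairs_singleton (a : α) : increasingPairs {a} = 0 := by
  simp [increasingPairs]

theorem increasingPairs_add {s t : Multiset α} (h : ∀ a ∈ s, ∀ b ∈ t, a < b) :
    increasingPairs (s + t) = increasingPairs s + increasingPairs t + s ×ˢ t := by
  have hst : (s ×ˢ t).filter (fun e ↦ e.1 < e.2) = s ×ˢ t :=
    Multiset.filter_eq_self.2 fun e he ↦ by
      rw [Multiset.mem_product] at he
      exact h _ he.1 _ he.2
  have hts : (t ×ˢ s).filter (fun e ↦ e.1 < e.2) = 0 :=
    Multiset.filter_eq_nil.2 fun e he ↦ by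
      rw [Multiset.mem_product] at he
      exact (h _ he.2 _ he.1).not_gt
  simp only [increasingPairs, Multiset.add_product, Multiset.product_add, Multiset.filter_add,
    hst, hts]
  abel

theorem increasingPairs_add_pair_add {s t : Multiset α} {p q : α} (hs : ∀ a ∈ s, a < p)
    (hpq : p < q) (ht : ∀ b ∈ t, q < b) :
    increasingPairs (s + ({p, q} + t)) = increasingPairs (s + t) +
      ({(p, q)} + s.bind fun a ↦ {(a, p), (a, q)}) + t.bind fun b ↦ {(q, b), (p, b)} := by
  have hpair : increasingPairs {p, q} = {(p, q)} := by
    rw [Multiset.insert_eq_cons, ← Multiset.singleton_add, increasingPairs_add (by simpa using hpq)]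
    simp [increasingPairs_singleton]
  have hleft : s ×ˢ ({p, q} : Multiset α) = s.bind fun a ↦ {(a, p), (a, q)} := rfl
  have hright : ({p, q} : Multiset α) ×ˢ t = t.bind fun b ↦ {(q, b), (p, b)} := by
    rw [Multiset.pair_comm]
    exact Multiset.bind_map_comm {q, p} t
  have hpqt : ∀ a ∈ ({p, q} : Multiset α), ∀ b ∈ t, a < b := by
    simpa using ⟨fun b hb ↦ hpq.trans (ht b hb), ht⟩
  have hst : ∀ a ∈ s, ∀ b ∈ t, a < b := fun a ha b hb ↦ (hs a ha).trans (hpq.trans (ht b hb))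
  have hspqt : ∀ a ∈ s, ∀ b ∈ {p, q} + t, a < b := by
    simpa using fun a ha ↦ ⟨hs a ha, (hs a ha).trans hpq, hst a ha⟩
  rw [increasingPairs_add hspqt, increasingPairs_add hpqt, increasingPairs_add hst,
    Multiset.product_add, hpair, hleft, hright]
  abel

end

/-- The number of elements of `s` carrying the less frequent of the two signs `ε`. -/
def minority {α : Type*} (ε : α → ℤˣ) (s : Multiset α) : ℕ :=
  min (s.countP (ε · = 1)) (s.countP (ε · = -1))

section

variable {α : Type*} (ε : α → ℤˣ)

theorem sum_map_sign_eq_countP_sub (s : Multiset α) :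
    (s.map fun a ↦ (ε a : ℤ)).sum = s.countP (ε · = 1) - s.countP (ε · = -1) := by
  induction s using Multiset.induction with
  | empty => simp
  | cons a s ih =>
    rw [Multiset.map_cons, Multiset.sum_cons, ih]
    rcases Int.units_eq_one_or (ε a) with ha | ha
    · rw [Multiset.countP_cons_of_pos s ha, Multiset.countP_cons_of_neg s (by simp [ha]), ha]
      push_cast
      ring
    · rw [Multiset.countP_cons_of_neg s (by simp [ha]), Multiset.countP_cons_of_pos s ha, ha]
      push_cast
      ring

variable {ε}

theorem minority_cons_of_nonneg {t : α} {s : Multiset α}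
    (h : 0 ≤ (s.map fun b ↦ ((ε t * ε b : ℤˣ) : ℤ)).sum) :
    minority ε (t ::ₘ s) = minority ε s := by
  simp only [Units.val_mul, Multiset.sum_map_mul_left, sum_map_sign_eq_countP_sub] at h
  rcases Int.units_eq_one_or (ε t) with ht | ht <;>
    simp only [ht, Units.val_one, Units.val_neg, one_mul, neg_one_mul, neg_sub, sub_nonneg,
      Nat.cast_le] at h <;>
    simp [minority, ht, h, Nat.le_succ_of_le h]

theorem minority_add_pair_add {p q : α} (hpq : ε p ≠ ε q) (s t : Multiset α) :
    minority ε (s + ({p, q} + t)) = minority ε (s + t) + 1 := by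
  rw [Multiset.insert_eq_cons, Multiset.cons_add, Multiset.singleton_add, Multiset.add_cons,
    Multiset.add_cons]
  rcases Int.units_eq_one_or (ε p) with hp | hp <;>
    rcases Int.units_eq_one_or (ε q) with hq | hq <;>
    simp [minority, hp, hq] at hpq ⊢

theorem minority_add_of_sum_sub_mem_Icc {s t : Multiset α}
    (h : (s.map fun a ↦ (ε a : ℤ)).sum - (t.map fun a ↦ (ε a : ℤ)).sum ∈ Set.Icc 0 1) :
    minority ε (s + t) = minority ε s + minority ε t := by
  rw [sum_map_sign_eq_countP_sub, sum_map_sign_eq_countP_sub, Set.mem_Icc] at h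
  simp only [minority, Multiset.countP_add]
  lia

-- With `e` the last letter of `l`, cut at the last minimum of the walk with steps `ε e * ε a`: the
-- next step is positive, so `ε t = ε e`.
theorem exists_extremal_cut (ε : α → ℤˣ) {l : List α} (hl : l ≠ []) :
    ∃ L t R, l = L ++ t :: R ∧
      (∀ S, S <:+ L → (S.map fun a ↦ ((ε t * ε a : ℤˣ) : ℤ)).sum ≤ 0) ∧
      ∀ P, P <+: R → 0 ≤ (P.map fun b ↦ ((ε t * ε b : ℤˣ) : ℤ)).sum := by
  obtain ⟨l, e, rfl⟩ := l.eq_nil_or_concat'.resolve_left hl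
  obtain ⟨L, R, hLR, hL, hR⟩ :=
    exists_append_suffix_nonpos_prefix_pos (fun a ↦ ((ε e * ε a : ℤˣ) : ℤ)) (l ++ [e])
  have hR0 : R ≠ [] := by
    rintro rfl
    simpa using hL [e] ⟨l, by simpa using hLR⟩
  obtain ⟨t, R, rfl⟩ := List.exists_cons_of_ne_nil hR0
  have ht : ε e = ε t := units_eq_of_mul_pos _ _ (by simpa using hR [t] (by simp) (by simp))
  rw [ht] at hL hR
  refine ⟨L, t, R, hLR, hL, fun P hP ↦ ?_⟩
  have hpos := hR (t :: P) (List.cons_prefix_cons.2 ⟨rfl, hP⟩) (by simp)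
  rw [List.map_cons, List.sum_cons, Int.units_mul_self, Units.val_one] at hpos
  lia

end

/-! ### Sign blocks -/

/-- The blocks of a good partition, read on edges: `(a, b)` is positive when `ε a = ε b`. The last
argument counts the bad blocks: it is `0` for types (1)–(3) and `1` for types (4) and (5). -/
inductive IsSignBlock {α : Type*} [LT α] (ε : α → ℤˣ) : Multiset (α × α) → ℕ → Prop
  | pos {a b : α} (hab : a < b) (h : ε a = ε b) : IsSignBlock ε {(a, b)} 0
  | commonRight {a' a b : α} (ha : a' < a) (hab : a < b) (h : ε a = ε b) (h' : ε a' ≠ ε b) :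
      IsSignBlock ε {(a, b), (a', b)} 0
  | commonLeft {a b b' : α} (hab : a < b) (hb : b < b') (h : ε a = ε b) (h' : ε a ≠ ε b') :
      IsSignBlock ε {(a, b), (a, b')} 0
  | rectangle {a' a b b' : α} (ha : a' < a) (hab : a < b) (hb : b < b') (h : ε a = ε b)
      (h' : ε a' = ε b') (hne : ε a' ≠ ε a) :
      IsSignBlock ε {(a, b), (a', b), (a, b'), (a', b')} 0
  | neg {a b : α} (hab : a < b) (h : ε a ≠ ε b) : IsSignBlock ε {(a, b)} 1
  | triangle {a m b : α} (ha : a < m) (hb : m < b) (h : ε a = ε b) (h' : ε a ≠ ε m) :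
      IsSignBlock ε {(m, b), (a, m), (a, b)} 1

theorem IsSignBlock.ne_zero {α : Type*} [LT α] {ε : α → ℤˣ} {p : Multiset (α × α)} {k : ℕ}
    (h : IsSignBlock ε p k) : p ≠ 0 := by
  cases h <;> simp

theorem IsSignBlock.eq_zero_or_one {α : Type*} [LT α] {ε : α → ℤˣ} {p : Multiset (α × α)} {k : ℕ}
    (h : IsSignBlock ε p k) : k = 0 ∨ k = 1 := by
  cases h <;> simp

/-- The pairs `(E, k)` for which the multiset of edges `E` splits into sign blocks, `k` of them
bad. -/
def decompositions {α : Type*} [LT α] (ε : α → ℤˣ) : AddSubmonoid (Multiset (α × α) × ℕ) :=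
  .closure {q | IsSignBlock ε q.1 q.2}

section

variable {α : Type*} [LinearOrder α] {ε : α → ℤˣ}

theorem IsSignBlock.mem_decompositions {p : Multiset (α × α)} {k : ℕ} (h : IsSignBlock ε p k) :
    (p, k) ∈ decompositions ε :=
  AddSubmonoid.subset_closure h

theorem sum_map_prodMk_zero {ι β : Type*} (F : ι → Multiset β) (l : List ι) :
    (l.map fun a ↦ (F a, (0 : ℕ))).sum = ((l : Multiset ι).bind F, 0) := by
  induction l with
  | nil => rfl
  | cons a l ih => simp [ih, ← Multiset.cons_coe]

theorem star_mem_decompositions {t : α} {R : List α} (hR : (t :: R).Pairwise (· < ·))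
    (hballot : ∀ P, P <+: R → 0 ≤ (P.map fun b ↦ ((ε t * ε b : ℤˣ) : ℤ)).sum) :
    ((R : Multiset α).bind fun b ↦ {(t, b)}, 0) ∈ decompositions ε := by
  obtain ⟨htR, hR⟩ := List.pairwise_cons.1 hR
  rw [← sum_map_prodMk_zero, ← zero_add (List.sum _)]
  refine sum_mem_of_ballot _ _ (fun b ↦ ε t * ε b) [] R (by simp) (fun b hb h ↦ ?_)
    (hR.imp_of_mem fun {b b'} hb _ hlt h h' ↦ ?_) (by simpa using hballot)
  all_goals simp only [units_mul_eq_one_iff, units_mul_eq_neg_one_iff] at *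
  · exact (IsSignBlock.pos (htR b hb) h).mem_decompositions
  · exact (IsSignBlock.commonLeft (htR b hb) hlt h h').mem_decompositions

theorem rightFan_mem_decompositions {p t : α} {R : List α} (hpt : p < t) (hne : ε p ≠ ε t)
    (hR : (t :: R).Pairwise (· < ·))
    (hballot : ∀ P, P <+: R → 0 ≤ (P.map fun b ↦ ((ε t * ε b : ℤˣ) : ℤ)).sum) :
    ((R : Multiset α).bind fun b ↦ {(t, b), (p, b)}, 0) ∈ decompositions ε := by
  obtain ⟨htR, hR⟩ := List.pairwise_cons.1 hR
  rw [← sum_map_prodMk_zero, ← zero_add (List.sum _)]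
  refine sum_mem_of_ballot _ _ (fun b ↦ ε t * ε b) [] R (by simp) (fun b hb h ↦ ?_)
    (hR.imp_of_mem fun {b b'} hb _ hlt h h' ↦ ?_) (by simpa using hballot)
  all_goals simp only [units_mul_eq_one_iff, units_mul_eq_neg_one_iff] at *
  · exact (IsSignBlock.commonRight hpt (htR b hb) h (h ▸ hne)).mem_decompositions
  · exact (IsSignBlock.rectangle hpt (htR b hb) hlt h
      (units_eq_of_ne_of_ne _ _ _ hne h') hne).mem_decompositions

theorem leftFan_mem_decompositions {p t : α} {L : List α} (hpt : p < t) (hne : ε p ≠ ε t)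
    (hL : (L ++ [p]).Pairwise (· < ·))
    (hballot : ∀ S, S <:+ L ++ [p] → (S.map fun a ↦ ((ε t * ε a : ℤˣ) : ℤ)).sum ≤ 0) :
    ({(p, t)} + (L : Multiset α).bind fun a ↦ {(a, p), (a, t)}, 1) ∈ decompositions ε := by
  rw [← List.pairwise_reverse, List.reverse_append, List.reverse_singleton,
    List.singleton_append, List.pairwise_cons] at hL
  obtain ⟨hLp, hL⟩ := hL
  have hmem : ([({(p, t)}, 1)] : List (Multiset (α × α) × ℕ)).sum +
      (L.reverse.map fun a ↦ ({(a, p), (a, t)}, 0)).sum ∈ decompositions ε := by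
    refine sum_mem_of_ballot _ _ (fun a ↦ ε p * ε a) _ _ ?_ (fun a ha h ↦ ?_)
      (hL.imp_of_mem fun {a a'} ha _ hlt h h' ↦ ?_) fun P hP ↦ ?_
    · rw [List.forall_mem_singleton]
      refine ⟨(IsSignBlock.neg hpt hne).mem_decompositions, fun a ha h ↦ ?_⟩
      rw [units_mul_eq_neg_one_iff] at h
      have hat : ε a = ε t := units_eq_of_ne_of_ne _ _ _ h.symm hne
      exact (IsSignBlock.triangle (hLp a ha) hpt hat h.symm).mem_decompositions
    · rw [units_mul_eq_one_iff] at h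
      exact (IsSignBlock.commonLeft (hLp a ha) hpt h.symm (h ▸ hne)).mem_decompositions
    · rw [units_mul_eq_one_iff] at h
      rw [units_mul_eq_neg_one_iff] at h'
      have hswap : ({(a, p), (a, t)} : Multiset (α × α)) + {(a', p), (a', t)} =
          {(a, p), (a', p), (a, t), (a', t)} :=
        congrArg ((a, p) ::ₘ ·) (Multiset.cons_swap (a, t) (a', p) {(a', t)})
      rw [Prod.mk_add_mk, hswap]
      exact (IsSignBlock.rectangle hlt (hLp a ha) hpt h.symm
        (units_eq_of_ne_of_ne _ _ _ h'.symm hne) (h ▸ h'.symm)).mem_decompositions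
    · have hbackward := hballot (p :: P).reverse (by
        simpa using List.reverse_suffix.2 (List.cons_prefix_cons.2 ⟨rfl, hP⟩))
      rw [List.map_reverse, List.sum_reverse, List.map_cons, List.sum_cons] at hbackward
      simp only [Units.val_mul, List.sum_map_mul_left, List.length_singleton,
        Nat.cast_one] at hbackward ⊢
      rw [Int.units_ne_iff_eq_neg.1 hne.symm, Units.val_neg, neg_mul, neg_mul,
        Int.units_coe_mul_self] at hbackward
      lia
  simpa [sum_map_prodMk_zero] using hmem

theorem increasingPairs_mem_decompositions (ε : α → ℤˣ) {l : List α} (hl : l.Pairwise (· < ·)) :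
    (increasingPairs (l : Multiset α), minority ε (l : Multiset α)) ∈ decompositions ε := by
  induction hn : l.length using Nat.strong_induction_on generalizing l with | _ n ih
  rcases eq_or_ne l [] with rfl | hne
  · exact zero_mem _
  obtain ⟨L, t, R, rfl, hbackward, hforward⟩ := exists_extremal_cut ε hne
  obtain ⟨hL, htR, hLR⟩ := List.pairwise_append.1 hl
  have ⟨ht, hR⟩ := List.pairwise_cons.1 htR
  rcases L.eq_nil_or_concat' with rfl | ⟨L, p, rfl⟩
  · have hstar := star_mem_decompositions htR hforward
    have hminority : minority ε ((t :: R : List α) : Multiset α) = minority ε (R : Multiset α) :=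
      minority_cons_of_nonneg (ε := ε) (s := ↑R) (hforward R List.prefix_rfl)
    convert add_mem (ih R.length (by simp [← hn]) hR rfl) hstar using 1
    rw [List.nil_append, hminority, ← Multiset.cons_coe, ← Multiset.singleton_add,
      increasingPairs_add (by simpa using ht)]
    simp only [increasingPairs_singleton, zero_add, add_zero, Prod.mk_add_mk]
    congr 2
    exact (Multiset.singleton_bind ..).trans (Multiset.bind_singleton ..).symm
  · have hp : ∀ a ∈ L, a < p := by simpa using (List.pairwise_append.1 hL).2.2
    have hpt : p < t := hLR p (by simp) t (by simp)
    have hpair : ε p ≠ ε t := by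
      intro h
      simpa [h] using hbackward [p] (List.suffix_append L [p])
    have hcoe : ((L ++ [p] ++ t :: R : List α) : Multiset α) = ↑L + ({p, t} + ↑R) := by
      simp [← Multiset.coe_add, ← Multiset.cons_coe]
    have hrec := ih (L ++ R).length (by simp [← hn])
      (hl.sublist (by simp)) rfl
    convert add_mem (add_mem hrec (leftFan_mem_decompositions hpt hpair hL hbackward))
      (rightFan_mem_decompositions hpt hpair htR hforward) using 1
    rw [hcoe, increasingPairs_add_pair_add hp hpt ht, minority_add_pair_add hpair,
      ← Multiset.coe_add]
    rfl

theorem increasingPairs_val_mem_decompositions (ε : α → ℤˣ)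
    (s : Finset α) :
    (increasingPairs s.val, minority ε s.val) ∈ decompositions ε := by
  rw [← Finset.sort_eq s (· ≤ ·)]
  exact increasingPairs_mem_decompositions ε s.sortedLT_sort.pairwise

end

theorem exists_finpartition_of_mem_closure {β γ : Type*} [DecidableEq γ] (f : β → γ)
    (bad : Finset γ → Prop) [DecidablePred bad] {𝓑 : Set (Multiset β × ℕ)}
    (hne : ∀ q ∈ 𝓑, q.1 ≠ 0)
    (hbad : ∀ q ∈ 𝓑, q.2 = if bad (q.1.map f).toFinset then 1 else 0)
    {q : Multiset β × ℕ} (hq : q ∈ AddSubmonoid.closure 𝓑) {P : Finset γ}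
    (hP : P.val = q.1.map f) :
    ∃ η : Finpartition P, (∀ p ∈ η.parts, ∃ q ∈ 𝓑, p = (q.1.map f).toFinset) ∧
      #(η.parts.filter bad) = q.2 := by
  induction hq using AddSubmonoid.closure_induction_left generalizing P with
  | zero =>
    obtain rfl : P = ∅ := Finset.val_eq_zero.1 hP
    exact ⟨Finpartition.empty _, by simp [Finpartition.empty]⟩
  | add_left b hb r _ ih =>
    rw [Prod.fst_add, Multiset.map_add] at hP
    have hnodup : (b.1.map f + r.1.map f).Nodup := hP ▸ P.nodup
    obtain ⟨-, hrn, hdisj⟩ := Multiset.nodup_add.1 hnodup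
    obtain ⟨η, htypes, hcard⟩ := ih (P := ⟨r.1.map f, hrn⟩) rfl
    let B : Finset γ := (b.1.map f).toFinset
    have hB : B ≠ ∅ := by simpa [B] using hne b hb
    have hdisjB : Disjoint ⟨r.1.map f, hrn⟩ B := by
      rw [Finset.disjoint_left]
      exact fun c hc hcB ↦ Multiset.disjoint_left.1 hdisj (Multiset.mem_toFinset.1 hcB) hc
    have hunion : ⟨r.1.map f, hrn⟩ ∪ B = P := by
      ext c
      simp [B, ← Finset.mem_val, hP, or_comm]
    have hBη : B ∉ η.parts := fun h ↦ hB (disjoint_self.1 (hdisjB.mono_left (η.le h)))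
    refine ⟨η.extend hB hdisjB hunion, ?_, ?_⟩
    · simpa [Finpartition.extend] using ⟨⟨b.1, ⟨b.2, hb⟩, rfl⟩, by simpa using htypes⟩
    · rw [Prod.snd_add, hbad b hb, ← hcard]
      change #((insert B η.parts).filter bad) = _
      rw [Finset.filter_insert]
      split_ifs with hbadB
      · rw [Finset.card_insert_of_notMem (by simp [hBη]), add_comm]
      · rw [zero_add]

/-! ### Canonical pairs as edges -/

-- The sum of the product signs tells the types (1)–(3) apart from the types (4) and (5).
theorem sum_psign_nonneg_of_isType1_or_2_or_3 {x : ℕ → ℝ} {p : Finset (ℕ × ℕ)}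
    (h : IsType1 x p ∨ IsType2 x p ∨ IsType3 x p) : 0 ≤ ∑ e ∈ p, psign x e.1 e.2 := by
  rcases h with ⟨i, j, rfl, h⟩ | ⟨i, j, i', j', rfl, h, h', -⟩ |
    ⟨i, j, l, l', -, hl', rfl, h, h', hi, hj⟩
  · simp [h]
  · have hne : (i, j) ≠ (i', j') := by rintro ⟨⟩; linarith
    simp [Finset.sum_pair hne, h, h']
  · have hil : i - l ≠ i := fun hil ↦ by rw [hil] at hi; linarith
    have hl0 : l' ≠ 0 := Nat.ne_of_gt hl'
    rw [sum_insert (by simp [hil.symm, hl0]), sum_insert (by simp [hil, hl0]),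
      sum_pair (by simp [hil.symm])]
    simp [h, h', hi, hj]

theorem sum_psign_of_isType4_or_5 {x : ℕ → ℝ} {p : Finset (ℕ × ℕ)}
    (h : IsType4 x p ∨ IsType5 x p) : ∑ e ∈ p, psign x e.1 e.2 = -1 := by
  rcases h with ⟨i, j, rfl, h⟩ | ⟨i, j, l, l', hl, -, rfl, h, hi, hj⟩
  · simpa using h
  · have hjl : j - l' ≠ j := fun hjl ↦ by rw [hjl] at hj; linarith
    have hl0 : l ≠ 0 := Nat.ne_of_gt hl
    rw [sum_insert (by simp [hl0, hjl.symm]), sum_pair (by simp [hl0])]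
    simp [h, hi, hj]

/-- The sign of a nonzero real as a unit of `ℤ`; the junk value at `0` is `-1`. -/
noncomputable def unitSign (r : ℝ) : ℤˣ := if 0 < r then 1 else -1

theorem unitSign_eq_one_iff {r : ℝ} : unitSign r = 1 ↔ 0 < r := by
  by_cases h : 0 < r <;> simp [unitSign, h]

theorem unitSign_eq_neg_one_iff {r : ℝ} (hr : r ≠ 0) : unitSign r = -1 ↔ r < 0 := by
  rw [← Int.units_ne_iff_eq_neg, Ne, unitSign_eq_one_iff, not_lt, hr.le_iff_lt]

theorem unitSign_mul {r s : ℝ} (hr : r ≠ 0) (hs : s ≠ 0) :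
    unitSign (r * s) = unitSign r * unitSign s := by
  rcases hr.lt_or_gt with hr | hr <;> rcases hs.lt_or_gt with hs | hs <;>
    simp [unitSign, mul_pos_iff, hr, hs, hr.not_gt, hs.not_gt]

theorem unitSign_prod {ι : Type*} (s : Finset ι) {x : ι → ℝ} (hx : ∀ i ∈ s, x i ≠ 0) :
    unitSign (∏ i ∈ s, x i) = ∏ i ∈ s, unitSign (x i) := by
  induction s using Finset.cons_induction with
  | empty => simp [unitSign]
  | cons i s hi ih =>
    rw [forall_mem_cons] at hx
    rw [prod_cons, prod_cons, unitSign_mul hx.1 (prod_ne_zero_iff.2 hx.2), ih hx.2]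

theorem sign_eq_cast_unitSign {r : ℝ} (hr : r ≠ 0) : Real.sign r = ((unitSign r : ℤ) : ℝ) := by
  rcases hr.lt_or_gt with hr | hr
  · simp [unitSign, Real.sign_of_neg hr, hr.not_gt]
  · simp [unitSign, Real.sign_of_pos hr, hr]

/-- The sign of the partial product `x 1 ⋯ x a`, for `a = 0, …, n`. -/
noncomputable def prefixSign (n : ℕ) (x : ℕ → ℝ) (a : Fin (n + 1)) : ℤˣ :=
  unitSign (∏ k ∈ Icc 1 (a : ℕ), x k)

/-- The edge `a < b` stands for the index pair `(a + 1, b)`, whose product sign is the product of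
the prefix signs at `a` and `b`. -/
def indexPair {n : ℕ} (e : Fin (n + 1) × Fin (n + 1)) : ℕ × ℕ := (e.1 + 1, e.2)

theorem indexPair_injective {n : ℕ} : Function.Injective (indexPair (n := n)) := fun e e' h ↦ by
  simpa [indexPair, Prod.ext_iff, Fin.ext_iff] using h

/-- The prefix signs twisted by parity; the index pair of `a < b` is canonical exactly when `a` and
`b` have the same canonical sign. -/
noncomputable def canonicalSign (n : ℕ) (x : ℕ → ℝ) (a : Fin (n + 1)) : ℤˣ :=
  (-1) ^ (a : ℕ) * prefixSign n x a

/-- The vertices of canonical sign `c`; `Kv` consists of the edges inside the two classes. -/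
noncomputable def canonicalClass (n : ℕ) (x : ℕ → ℝ) (c : ℤˣ) : Finset (Fin (n + 1)) :=
  univ.filter fun a ↦ canonicalSign n x a = c

section

variable {n : ℕ} {x : ℕ → ℝ}

theorem mem_increasingPairs_canonicalClass_add {e : Fin (n + 1) × Fin (n + 1)} :
    e ∈ increasingPairs (canonicalClass n x 1).val +
        increasingPairs (canonicalClass n x (-1)).val ↔
      e.1 < e.2 ∧ canonicalSign n x e.1 = canonicalSign n x e.2 := by
  rcases Int.units_eq_one_or (canonicalSign n x e.1) with h | h <;>
    simp [increasingPairs, canonicalClass, h, eq_comm, and_comm]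

theorem nodup_increasingPairs_canonicalClass_add :
    (increasingPairs (canonicalClass n x 1).val +
      increasingPairs (canonicalClass n x (-1)).val).Nodup := by
  have hnodup (c : ℤˣ) : (increasingPairs (canonicalClass n x c).val).Nodup :=
    ((canonicalClass n x c).nodup.product (canonicalClass n x c).nodup).filter _
  refine Multiset.nodup_add.2 ⟨hnodup 1, hnodup (-1), Multiset.disjoint_left.2 fun {e} h h' ↦ ?_⟩
  have hsign {c : ℤˣ} (h : e ∈ increasingPairs (canonicalClass n x c).val) :
      canonicalSign n x e.1 = c := by
    have hmem : e.1 ∈ canonicalClass n x c :=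
      (Multiset.mem_product.1 (Multiset.mem_filter.1 h).1).1
    exact (mem_filter.1 hmem).2
  exact absurd ((hsign h).symm.trans (hsign h')) (by decide)

variable (hx : ∀ i ∈ Icc 1 n, x i ≠ 0)
include hx

theorem psign_eq_prefixSign_mul {a b : Fin (n + 1)} (hab : a ≤ b) :
    psign x (a + 1) b = (((prefixSign n x a * prefixSign n x b : ℤˣ) : ℤ) : ℝ) := by
  have hne {i j : ℕ} (hi : 1 ≤ i) (hj : j ≤ n) : ∀ k ∈ Icc i j, x k ≠ 0 :=
    fun k hk ↦ hx k (Icc_subset_Icc hi hj hk)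
  have hfactor : prefixSign n x b =
      prefixSign n x a * ∏ k ∈ Icc (a + 1 : ℕ) b, unitSign (x k) := by
    have hIcc (m : ℕ) : Icc 1 m = Ioc 0 m := Icc_add_one_left_eq_Ioc 0 m
    rw [← unitSign_prod _ (hne (by simp) b.is_le), prefixSign, prefixSign,
      ← unitSign_mul (prod_ne_zero_iff.2 (hne le_rfl a.is_le))
        (prod_ne_zero_iff.2 (hne (by simp) b.is_le)),
      Icc_add_one_left_eq_Ioc, hIcc, hIcc, prod_Ioc_consecutive _ a.val.zero_le hab]
  rw [hfactor, ← mul_assoc, Int.units_mul_self, one_mul, psign, Units.coe_prod, Int.cast_prod]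
  exact prod_congr rfl fun k hk ↦ sign_eq_cast_unitSign (hne (by simp) b.is_le k hk)

theorem psign_eq_neg_one_pow_iff {a b : Fin (n + 1)} (hab : a ≤ b) :
    psign x (a + 1) b = (-1) ^ (a + 1 + b + 1 : ℕ) ↔
      canonicalSign n x a = canonicalSign n x b := by
  have hpow : (-1 : ℝ) ^ (a + 1 + b + 1 : ℕ) =
      ((((-1) ^ (a : ℕ) * (-1) ^ (b : ℕ) : ℤˣ) : ℤ) : ℝ) := by
    push_cast
    ring
  rw [psign_eq_prefixSign_mul hx hab, hpow, Int.cast_inj, Units.val_inj, units_mul_eq_mul_iff]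
  rfl

theorem Kv_val_eq_map_increasingPairs : (Kv n x).val =
    (increasingPairs (canonicalClass n x 1).val +
      increasingPairs (canonicalClass n x (-1)).val).map indexPair := by
  refine (Multiset.Nodup.ext (Kv n x).nodup
    (nodup_increasingPairs_canonicalClass_add.map indexPair_injective)).2 fun ⟨i, j⟩ ↦ ?_
  simp only [mem_val, Kv, mem_filter, mem_product, mem_Icc, Multiset.mem_map,
    mem_increasingPairs_canonicalClass_add, indexPair, Prod.mk.injEq]
  constructor
  · rintro ⟨⟨⟨hi, -⟩, -, hj⟩, hij, hsign⟩
    refine ⟨(⟨i - 1, by lia⟩, ⟨j, by lia⟩),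
      ⟨Fin.mk_lt_mk.2 (by lia), ?_⟩, Nat.sub_add_cancel hi, rfl⟩
    rw [← psign_eq_neg_one_pow_iff hx (Fin.mk_le_mk.2 (by lia))]
    simpa [Nat.sub_add_cancel hi] using hsign
  · rintro ⟨⟨a, b⟩, ⟨hab, hsign⟩, rfl, rfl⟩
    exact ⟨by lia, by simpa using hab, (psign_eq_neg_one_pow_iff hx hab.le).2 hsign⟩

theorem psign_eq_one_of_prefixSign_eq {a b : Fin (n + 1)} (hab : a < b)
    (h : prefixSign n x a = prefixSign n x b) : psign x (a + 1) b = 1 := by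
  rw [psign_eq_prefixSign_mul hx hab.le, (units_mul_eq_one_iff _ _).2 h]
  simp

theorem psign_eq_neg_one_of_prefixSign_ne {a b : Fin (n + 1)} (hab : a < b)
    (h : prefixSign n x a ≠ prefixSign n x b) : psign x (a + 1) b = -1 := by
  rw [psign_eq_prefixSign_mul hx hab.le, (units_mul_eq_neg_one_iff _ _).2 h]
  simp

variable {p : Multiset (Fin (n + 1) × Fin (n + 1))}

theorem IsSignBlock.isType1_or_2_or_3 (h : IsSignBlock (prefixSign n x) p 0) :
    IsType1 x (p.map indexPair).toFinset ∨ IsType2 x (p.map indexPair).toFinset ∨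
      IsType3 x (p.map indexPair).toFinset := by
  have hpos {a b : Fin (n + 1)} := psign_eq_one_of_prefixSign_eq hx (a := a) (b := b)
  have hneg {a b : Fin (n + 1)} := psign_eq_neg_one_of_prefixSign_ne hx (a := a) (b := b)
  cases h with
  | pos hab h => exact .inl ⟨_, _, rfl, hpos hab h⟩
  | @commonRight a' a b ha hab h h' =>
    exact .inr <| .inl ⟨a + 1, b, a' + 1, b, by simp [indexPair], hpos hab h,
      hneg (ha.trans hab) h', .inl ⟨by simpa using ha.le, rfl⟩⟩
  | @commonLeft a b b' hab hb h h' =>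
    exact .inr <| .inl ⟨a + 1, b, a + 1, b', by simp [indexPair], hpos hab h,
      hneg (hab.trans hb) h', .inr ⟨rfl, by simpa using hb.le⟩⟩
  | @rectangle a' a b b' ha hab hb h h' hne =>
    have hsub : (a + 1 - (a - a') : ℕ) = a' + 1 := by lia
    have hadd : (b + (b' - b) : ℕ) = b' := by lia
    refine .inr <| .inr ⟨a + 1, b, a - a', b' - b, by lia, by lia, ?_⟩
    rw [hsub, hadd]
    exact ⟨by simp [indexPair], hpos hab h, hpos (ha.trans <| hab.trans hb) h',
      hneg (ha.trans hab) (h ▸ hne), hneg (hab.trans hb) (h' ▸ hne.symm)⟩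

theorem IsSignBlock.isType4_or_5 (h : IsSignBlock (prefixSign n x) p 1) :
    IsType4 x (p.map indexPair).toFinset ∨ IsType5 x (p.map indexPair).toFinset := by
  have hpos {a b : Fin (n + 1)} := psign_eq_one_of_prefixSign_eq hx (a := a) (b := b)
  have hneg {a b : Fin (n + 1)} := psign_eq_neg_one_of_prefixSign_ne hx (a := a) (b := b)
  cases h with
  | neg hab h => exact .inl ⟨_, _, rfl, hneg hab h⟩
  | @triangle a m b ha hb h h' =>
    have hadd : (a + 1 + (m - a) : ℕ) = m + 1 := by lia
    have hsub : (b - (b - m) : ℕ) = m := by lia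
    refine .inr ⟨a + 1, b, m - a, b - m, by lia, by lia, ?_⟩
    rw [hadd, hsub]
    refine ⟨?_, hpos (ha.trans hb) h, hneg hb (h ▸ h'.symm), hneg ha h'⟩
    ext e
    simpa [indexPair] using or_rotate.symm

open Classical in
theorem IsSignBlock.eq_ite_isType4_or_5 {k : ℕ} (h : IsSignBlock (prefixSign n x) p k) :
    k = if IsType4 x (p.map indexPair).toFinset ∨ IsType5 x (p.map indexPair).toFinset
      then 1 else 0 := by
  rcases h.eq_zero_or_one with rfl | rfl
  · have hnot : ¬(IsType4 x (p.map indexPair).toFinset ∨ IsType5 x (p.map indexPair).toFinset) :=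
      fun h45 ↦ by
        linarith [sum_psign_nonneg_of_isType1_or_2_or_3 (h.isType1_or_2_or_3 hx),
          sum_psign_of_isType4_or_5 h45]
    rw [if_neg hnot]
  · rw [if_pos (h.isType4_or_5 hx)]

end

theorem canonicalClass_one_add_neg_one (n : ℕ) (x : ℕ → ℝ) :
    (canonicalClass n x 1).val + (canonicalClass n x (-1)).val = univ.val := by
  simp only [canonicalClass, Finset.filter_val, ← Int.units_ne_iff_eq_neg]
  exact Multiset.filter_add_not _ _

theorem sum_prefixSign_canonicalClass_sub (n : ℕ) (x : ℕ → ℝ) :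
    ∑ a ∈ canonicalClass n x 1, (prefixSign n x a : ℤ) -
      ∑ a ∈ canonicalClass n x (-1), (prefixSign n x a : ℤ) = ∑ a ∈ range (n + 1), (-1) ^ a := by
  have hpow (a : Fin (n + 1)) : (-1 : ℤ) ^ (a : ℕ) = canonicalSign n x a * prefixSign n x a := by
    simp [canonicalSign, mul_assoc]
  have hsum (c : ℤˣ) : ∑ a ∈ canonicalClass n x c, (-1 : ℤ) ^ (a : ℕ) =
      c * ∑ a ∈ canonicalClass n x c, (prefixSign n x a : ℤ) := by
    rw [mul_sum]
    exact sum_congr rfl fun a ha ↦ by rw [hpow, (mem_filter.1 ha).2]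
  have hsplit : ∑ a ∈ canonicalClass n x 1, (-1 : ℤ) ^ (a : ℕ) +
      ∑ a ∈ canonicalClass n x (-1), (-1 : ℤ) ^ (a : ℕ) = ∑ a : Fin (n + 1), (-1) ^ (a : ℕ) := by
    simp only [sum_eq_multiset_sum, ← Multiset.sum_add, ← Multiset.map_add,
      canonicalClass_one_add_neg_one]
  rw [← Fin.sum_univ_eq_sum_range, ← hsplit, hsum, hsum]
  simp [sub_eq_add_neg]

theorem card_filter_univ_fin_succ (n : ℕ) (q : ℕ → Prop) [DecidablePred q] :
    #{a : Fin (n + 1) | q a} = #{i ∈ Icc 1 n | q i} + if q 0 then 1 else 0 := by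
  rw [card_filter, card_filter, Fin.sum_univ_eq_sum_range (fun i ↦ if q i then 1 else 0),
    range_eq_Ico, sum_eq_sum_Ico_succ_bot (by simp), add_comm, zero_add]
  rfl

theorem minority_prefixSign_univ {n : ℕ} {x : ℕ → ℝ} (hx : ∀ i ∈ Icc 1 n, x i ≠ 0) :
    minority (prefixSign n x) univ.val =
      min (#{i ∈ Icc 1 n | 0 < ∏ k ∈ Icc 1 i, x k} + 1)
        #{i ∈ Icc 1 n | ∏ k ∈ Icc 1 i, x k < 0} := by
  have hne (a : Fin (n + 1)) : ∏ k ∈ Icc 1 (a : ℕ), x k ≠ 0 :=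
    prod_ne_zero_iff.2 fun k hk ↦ hx k (Icc_subset_Icc_right a.is_le hk)
  have hpos := card_filter_univ_fin_succ n fun i ↦ 0 < ∏ k ∈ Icc 1 i, x k
  have hneg := card_filter_univ_fin_succ n fun i ↦ ∏ k ∈ Icc 1 i, x k < 0
  simp only [Icc_eq_empty_of_lt one_pos, prod_empty, one_pos, zero_lt_one.not_gt, if_true, if_false,
    add_zero] at hpos hneg
  rw [← hpos, ← hneg]
  simp only [minority, Multiset.countP_eq_card_filter, prefixSign, unitSign_eq_one_iff,
    unitSign_eq_neg_one_iff (hne _)]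
  rfl

theorem minority_canonicalClass_add {n : ℕ} {x : ℕ → ℝ} (hx : ∀ i ∈ Icc 1 n, x i ≠ 0) :
    minority (prefixSign n x) (canonicalClass n x 1).val +
        minority (prefixSign n x) (canonicalClass n x (-1)).val =
      min (#{i ∈ Icc 1 n | 0 < ∏ k ∈ Icc 1 i, x k} + 1)
        #{i ∈ Icc 1 n | ∏ k ∈ Icc 1 i, x k < 0} := by
  have hbalance : ∑ a ∈ canonicalClass n x 1, (prefixSign n x a : ℤ) -
      ∑ a ∈ canonicalClass n x (-1), (prefixSign n x a : ℤ) ∈ Set.Icc 0 1 := by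
    rw [sum_prefixSign_canonicalClass_sub, neg_one_geom_sum]
    split_ifs <;> simp
  rw [← minority_prefixSign_univ hx, ← canonicalClass_one_add_neg_one n x,
    minority_add_of_sum_sub_mem_Icc hbalance]

open Classical in
theorem Kv_has_good_partition_general (n : ℕ) (x : ℕ → ℝ) (hx : ∀ i ∈ Icc 1 n, x i ≠ 0) :
    ∃ η : Finpartition (Kv n x),
      (∀ p ∈ η.parts,
        IsType1 x p ∨ IsType2 x p ∨ IsType3 x p ∨ IsType4 x p ∨ IsType5 x p) ∧
      #{p ∈ η.parts | IsType4 x p ∨ IsType5 x p} =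
        min (#{i ∈ Icc 1 n | 0 < ∏ k ∈ Icc 1 i, x k} + 1)
          #{i ∈ Icc 1 n | ∏ k ∈ Icc 1 i, x k < 0} := by
  have hdecomposition := add_mem
    (increasingPairs_val_mem_decompositions (prefixSign n x) (canonicalClass n x 1))
    (increasingPairs_val_mem_decompositions (prefixSign n x) (canonicalClass n x (-1)))
  obtain ⟨η, htype, hcard⟩ := exists_finpartition_of_mem_closure indexPair
    (fun p ↦ IsType4 x p ∨ IsType5 x p) (fun q hq ↦ IsSignBlock.ne_zero hq)
    (fun q hq ↦ IsSignBlock.eq_ite_isType4_or_5 hx hq) hdecomposition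
    (Kv_val_eq_map_increasingPairs hx)
  refine ⟨η, fun p hp ↦ ?_, hcard.trans (minority_canonicalClass_add hx)⟩
  obtain ⟨⟨q, k⟩, hq, rfl⟩ := htype p hp
  rcases hq.eq_zero_or_one with rfl | rfl
  · have hgood := hq.isType1_or_2_or_3 hx
    tauto
  · exact .inr <| .inr <| .inr (hq.isType4_or_5 hx)

open Classical in
theorem Kv_has_good_partition (n : ℕ) (x : ℕ → ℝ)
    (hx : ∀ i ∈ Finset.Icc 1 n, x i ∈ Set.Icc (-1 : ℝ) 1 ∧ x i ≠ 0) :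
    ∃ η : Finset (Finset (ℕ × ℕ)),
      (∀ p ∈ η, p.Nonempty) ∧
      (η : Set (Finset (ℕ × ℕ))).PairwiseDisjoint id ∧
      η.biUnion id = Kv n x ∧
      (∀ p ∈ η, IsType1 x p ∨ IsType2 x p ∨ IsType3 x p ∨ IsType4 x p ∨ IsType5 x p) ∧
      (η.filter (fun p => IsType4 x p ∨ IsType5 x p)).card =
        min (((Finset.Icc 1 n).filter
            (fun i => 0 < ∏ k ∈ Finset.Icc 1 i, x k)).card + 1)
          (((Finset.Icc 1 n).filter
            (fun i => ∏ k ∈ Finset.Icc 1 i, x k < 0)).card) := by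
  obtain ⟨η, htype, hcard⟩ := Kv_has_good_partition_general n x fun i hi ↦ (hx i hi).2
  exact ⟨η.parts, fun _ ↦ η.nonempty_of_mem_parts, η.disjoint, η.biUnion_parts, htype, hcard⟩
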